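/- There exists a constant c' > 0 such that for all integers n ≥ 2, r(K_4^(3), S_n) ≤ 2^{c'·n^{2/3}·log n}; that is, if N ≥ 2^{c'·n^{2/3}·log n}, then every 2-coloring of K_N^(3) contains a red copy of K_4^(3) or a blue copy of S_n. -/

import Mathlib

/-- A red copy of `K_s^(3)`: an `s`-element vertex set all of whose 3-element subsets
are red (red = `true`). -/
def HasRedClique3 (N s : ℕ) (χ : Finset (Fin N) → Bool) : Prop :=
  ∃ S : Finset (Fin N), S.card = s ∧ ∀ T ⊆ S, T.card = 3 → χ T = true

/-- A blue copy of the star `Sₙ` (blue = `false`). -/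
def HasBlueStar (N n : ℕ) (χ : Finset (Fin N) → Bool) : Prop :=
  ∃ v : Fin N, ∃ S : Finset (Fin N), v ∉ S ∧ S.card = n ∧
    ∀ a ∈ S, ∀ b ∈ S, a ≠ b → χ {v, a, b} = false

/-!
Fix a vertex set `A` so large that, absent a blue star, the red link of every vertex outside `A`
has a `k`-clique in `A`; by pigeonhole one such clique `K` lies in the red links of all vertices of
a large set `B`. Absent a red `K₄⁽³⁾`, the red links of the vertices of `K` are edge-disjoint on
`B`, so one of them has density at most `1 / k` there. The Erdős–Szemerédi theorem for sparse
graphs then gives a homogeneous `n`-set in that link: an independent set is a blue star centred at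
this vertex of `K`, a clique is a blue star centred at any other vertex of `K`. The choice
`k ≈ n^(1/3)` balances the cost `n^O(k²)` of finding `K` against the cost `n^O(n/k)` of the
Erdős–Szemerédi theorem.
-/

open Finset

section Ramsey

variable {V : Type*} {G : SimpleGraph V} {W S : Finset V} {v : V} {s t : ℕ}

lemma exists_isNClique_succ_of_subset_filter_adj [DecidableRel G.Adj] (hv : v ∈ W)
    (hSW : S ⊆ {u ∈ W | G.Adj v u}) (hS : G.IsNClique s S) :
    ∃ S' ⊆ W, G.IsNClique (s + 1) S' := by
  classical
  exact ⟨insert v S, insert_subset hv (hSW.trans (filter_subset _ _)),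
    hS.insert fun _ hb => (mem_filter.1 (hSW hb)).2⟩

lemma card_filter_adj_add_card_filter_compl_adj_add_one [DecidableEq V]
    [DecidableRel G.Adj] (hv : v ∈ W) :
    #{u ∈ W | G.Adj v u} + #{u ∈ W | Gᶜ.Adj v u} + 1 = #W := by
  have hadj : {u ∈ W.erase v | G.Adj v u} = {u ∈ W | G.Adj v u} := by
    ext u; simp only [mem_filter, mem_erase]; grind [G.ne_of_adj]
  have hcompl : {u ∈ W.erase v | ¬G.Adj v u} = {u ∈ W | Gᶜ.Adj v u} := by
    ext u; simp only [mem_filter, mem_erase, SimpleGraph.compl_adj]; grind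
  rw [← hadj, ← hcompl, card_filter_add_card_filter_not, card_erase_add_one hv]

theorem exists_isNClique_or_isNIndepSet_of_choose_le_card (hW : (s + t).choose s ≤ #W) :
    (∃ S ⊆ W, G.IsNClique s S) ∨ ∃ S ⊆ W, G.IsNIndepSet t S := by
  classical
  induction s generalizing t W with
  | zero => exact .inl ⟨∅, empty_subset _, by simp⟩
  | succ s ihs =>
    induction t generalizing W with
    | zero => exact .inr ⟨∅, empty_subset _, by simp [← SimpleGraph.isNClique_compl]⟩
    | succ t iht =>
      obtain ⟨v, hv⟩ := card_pos.1 ((Nat.choose_pos (by lia)).trans_le hW)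
      have hpascal : (s + 1 + (t + 1)).choose (s + 1) =
          (s + (t + 1)).choose s + (s + 1 + t).choose (s + 1) := by
        rw [← add_assoc, Nat.choose_succ_succ, add_right_comm s 1 t, add_assoc s t 1]
      have hsplit := card_filter_adj_add_card_filter_compl_adj_add_one (G := G) hv
      by_cases hadj : (s + (t + 1)).choose s ≤ #{u ∈ W | G.Adj v u}
      · obtain ⟨S, hSW, hS⟩ | ⟨S, hSW, hS⟩ := ihs hadj
        · exact .inl (exists_isNClique_succ_of_subset_filter_adj hv hSW hS)
        · exact .inr ⟨S, hSW.trans (filter_subset _ _), hS⟩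
      · have hcompl : (s + 1 + t).choose (s + 1) ≤ #{u ∈ W | Gᶜ.Adj v u} := by lia
        obtain ⟨S, hSW, hS⟩ | ⟨S, hSW, hS⟩ := iht hcompl
        · exact .inl ⟨S, hSW.trans (filter_subset _ _), hS⟩
        · simp only [← SimpleGraph.isNClique_compl] at hS ⊢
          exact .inr (exists_isNClique_succ_of_subset_filter_adj hv hSW hS)

end Ramsey

section ErdosSzemeredi

variable {V : Type*} {G : SimpleGraph V} {B I J U X : Finset V} {D k m n t : ℕ}

lemma exists_isIndepSet_forall_card_le (G : SimpleGraph V) (B : Finset V) :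
    ∃ I ⊆ B, G.IsIndepSet I ∧ ∀ J ⊆ B, G.IsIndepSet J → #J ≤ #I := by
  classical
  obtain ⟨I, hI, hmax⟩ :=
    exists_max_image (B.powerset.filter fun I : Finset V => G.IsIndepSet I) card ⟨∅, by simp⟩
  simp only [mem_filter, mem_powerset, and_imp] at hI hmax
  exact ⟨I, hI.1, hI.2, hmax⟩

-- Otherwise `I \ X ∪ J` would be a larger independent set than `I`.
lemma card_le_card_of_forall_adj_mem [DecidableEq V] (hIB : I ⊆ B) (hI : G.IsIndepSet I)
    (hmax : ∀ J ⊆ B, G.IsIndepSet J → #J ≤ #I) (hXI : X ⊆ I) (hJB : J ⊆ B \ I)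
    (hJ : G.IsIndepSet J) (hJX : ∀ v ∈ J, ∀ u ∈ I, G.Adj v u → u ∈ X) : #J ≤ #X := by
  have hindep : G.IsIndepSet ((I \ X ∪ J : Finset V) : Set V) := by
    intro a ha b hb hab hadj
    simp only [coe_union, coe_sdiff, Set.mem_union, Set.mem_sdiff, mem_coe] at ha hb
    obtain ⟨haI, haX⟩ | haJ := ha <;> obtain ⟨hbI, hbX⟩ | hbJ := hb
    · exact hI haI hbI hab hadj
    · exact haX (hJX b hbJ a haI hadj.symm)
    · exact hbX (hJX a haJ b hbI hadj)
    · exact hJ haJ hbJ hab hadj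
  have hdisj : Disjoint (I \ X) J := disjoint_sdiff.mono sdiff_subset hJB
  have hle := hmax _ (union_subset (sdiff_subset.trans hIB) (hJB.trans sdiff_subset)) hindep
  rw [card_union_of_disjoint hdisj] at hle
  have := card_sdiff_add_card_eq_card hXI
  lia

lemma card_filter_card_le_powerset_le {α : Type*} (s : Finset α) (hn : 0 < n) (hs : #s ≤ n) :
    #{X ∈ s.powerset | #X ≤ t} ≤ (t + 1) * n ^ t := by
  classical
  calc #{X ∈ s.powerset | #X ≤ t}
      ≤ #((range (t + 1)).biUnion fun j => s.powersetCard j) := by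
        refine card_le_card fun X hX => ?_
        simp only [mem_filter, mem_powerset] at hX
        simp only [mem_biUnion, mem_range, mem_powersetCard]
        exact ⟨#X, by lia, hX.1, rfl⟩
    _ ≤ #(range (t + 1)) * n ^ t := by
        refine card_biUnion_le_card_mul _ _ _ fun j hj => ?_
        rw [card_powersetCard]
        calc (#s).choose j ≤ #s ^ j := Nat.choose_le_pow _ _
          _ ≤ n ^ j := Nat.pow_le_pow_left hs j
          _ ≤ n ^ t := Nat.pow_le_pow_right hn (by simpa [Nat.lt_succ_iff] using hj)
    _ = (t + 1) * n ^ t := by rw [card_range]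

variable [DecidableRel G.Adj]

lemma exists_le_card_filter_filter_adj_eq [DecidableEq V] (hn : 0 < n) (hI : #I ≤ n)
    (hU : ∀ v ∈ U, #{u ∈ I | G.Adj v u} ≤ t) (hm : (t + 1) * n ^ t * m ≤ #U) :
    ∃ X ⊆ I, #X ≤ t ∧ m ≤ #{v ∈ U | {u ∈ I | G.Adj v u} = X} := by
  have hmaps : ∀ v ∈ U, {u ∈ I | G.Adj v u} ∈ ({X ∈ I.powerset | #X ≤ t} : Finset _) :=
    fun v hv => mem_filter.2 ⟨mem_powerset.2 (filter_subset _ _), hU v hv⟩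
  obtain ⟨X, hX, hmX⟩ := exists_le_card_fiber_of_mul_le_card_of_maps_to hmaps ⟨∅, by simp⟩
    ((Nat.mul_le_mul_right m (card_filter_card_le_powerset_le I hn hI)).trans hm)
  simp only [mem_filter, mem_powerset] at hX
  exact ⟨X, hX.1, hX.2, hmX⟩

lemma card_interedges_eq_sum_card_filter_adj (G : SimpleGraph V) [DecidableRel G.Adj]
    (s t : Finset V) : #(G.interedges s t) = ∑ v ∈ s, #{u ∈ t | G.Adj v u} := by
  simp only [SimpleGraph.interedges_def, card_filter, sum_product]

lemma card_le_two_mul_card_filter_card_filter_adj_le (hB : k * #(G.interedges B B) ≤ #B ^ 2) :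
    #B ≤ 2 * #{v ∈ B | k * #{u ∈ B | G.Adj v u} ≤ 2 * #B} := by
  set high := {v ∈ B | ¬k * #{u ∈ B | G.Adj v u} ≤ 2 * #B}
  have hsum : #high * (2 * #B) ≤ #B ^ 2 := calc
    #high * (2 * #B) ≤ ∑ v ∈ high, k * #{u ∈ B | G.Adj v u} := by
      rw [← smul_eq_mul]
      exact card_nsmul_le_sum _ _ _ fun v hv => (not_le.1 (mem_filter.1 hv).2).le
    _ ≤ ∑ v ∈ B, k * #{u ∈ B | G.Adj v u} := sum_le_sum_of_subset (filter_subset _ _)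
    _ = k * #(G.interedges B B) := by rw [← mul_sum, card_interedges_eq_sum_card_filter_adj]
    _ ≤ #B ^ 2 := hB
  have hsplit := card_filter_add_card_filter_not (s := B)
    fun v => k * #{u ∈ B | G.Adj v u} ≤ 2 * #B
  obtain hB0 | hB0 := (#B).eq_zero_or_pos
  · lia
  · have : 2 * #high ≤ #B := le_of_mul_le_mul_right (by linarith) hB0
    lia

lemma mul_card_filter_le_card_filter_adj_le (hI : ∀ u ∈ I, k * #{v ∈ B | G.Adj u v} ≤ D) :
    k * t * #{v ∈ B | t ≤ #{u ∈ I | G.Adj v u}} ≤ #I * D := by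
  set U := {v ∈ B | t ≤ #{u ∈ I | G.Adj v u}}
  calc k * t * #U = k * (#U * t) := by ring
    _ ≤ k * ∑ v ∈ U, #{u ∈ I | G.Adj v u} := by
      gcongr
      rw [← smul_eq_mul]
      exact card_nsmul_le_sum _ _ _ fun v hv => (mem_filter.1 hv).2
    _ = k * ∑ u ∈ I, #{v ∈ U | G.Adj u v} := by
      congr 1
      simpa only [bipartiteAbove, bipartiteBelow, G.adj_comm] using
        sum_card_bipartiteAbove_eq_sum_card_bipartiteBelow (s := U) (t := I) G.Adj
    _ ≤ ∑ u ∈ I, k * #{v ∈ B | G.Adj u v} := by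
      rw [mul_sum]
      gcongr
      exact filter_subset _ _
    _ ≤ #I * D := by
      rw [← smul_eq_mul]
      exact sum_le_card_nsmul _ _ _ hI

lemma card_le_eight_mul_card_filter_card_filter_adj_le [DecidableEq V] {L : Finset V}
    (hLB : L ⊆ B) (hL : ∀ u ∈ L, k * #{v ∈ B | G.Adj u v} ≤ 2 * #B) (hBL : #B ≤ 2 * #L)
    (hIL : I ⊆ L) (hIn : #I < n) (hkt : 8 * n ≤ k * (t + 1)) (hnB : 8 * n ≤ #B) :
    #B ≤ 8 * #{v ∈ L \ I | #{u ∈ I | G.Adj v u} ≤ t} := by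
  have hlarge : 4 * #{v ∈ B | t + 1 ≤ #{u ∈ I | G.Adj v u}} ≤ #B := by
    have hcount := calc
      8 * n * #{v ∈ B | t + 1 ≤ #{u ∈ I | G.Adj v u}}
          ≤ k * (t + 1) * #{v ∈ B | t + 1 ≤ #{u ∈ I | G.Adj v u}} := by gcongr
      _ ≤ #I * (2 * #B) := mul_card_filter_le_card_filter_adj_le fun u hu => hL u (hIL hu)
      _ ≤ n * (2 * #B) := by gcongr
    exact le_of_mul_le_mul_left (by linarith) (by lia : 0 < 2 * n)
  have hlarge' : #{v ∈ L \ I | ¬#{u ∈ I | G.Adj v u} ≤ t} ≤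
      #{v ∈ B | t + 1 ≤ #{u ∈ I | G.Adj v u}} := by
    simp only [not_le, Nat.succ_le_iff]
    gcongr
    exact sdiff_subset.trans hLB
  have hsplit := card_filter_add_card_filter_not (s := L \ I) fun v => #{u ∈ I | G.Adj v u} ≤ t
  have hLI := card_sdiff_add_card_eq_card hIL
  lia

-- A maximum independent set `I` of low-degree vertices receives few edges, so many vertices share a
-- small trace `X` on `I`; an independent set of `t + 1` of them could then replace `X` in `I`.
theorem exists_isNClique_or_isNIndepSet_of_sparse {s : ℕ} (hkt : 8 * n ≤ k * (t + 1))
    (hsparse : k * #(G.interedges B B) ≤ #B ^ 2) (hnB : 8 * n ≤ #B)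
    (hB : 8 * ((t + 1) * n ^ t * (s + (t + 1)).choose s) ≤ #B) :
    (∃ S ⊆ B, G.IsNClique s S) ∨ ∃ S ⊆ B, G.IsNIndepSet n S := by
  classical
  set L := {v ∈ B | k * #{u ∈ B | G.Adj v u} ≤ 2 * #B}
  have hLB : L ⊆ B := filter_subset _ _
  obtain ⟨I, hIL, hI, hmax⟩ := exists_isIndepSet_forall_card_le G L
  obtain hnI | hIn := le_or_gt n #I
  · obtain ⟨S, hSI, hS⟩ := exists_subset_card_eq hnI
    exact .inr ⟨S, hSI.trans (hIL.trans hLB), hI.mono (coe_subset.2 hSI), hS⟩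
  have hmany := card_le_eight_mul_card_filter_card_filter_adj_le hLB
    (fun u hu => (mem_filter.1 hu).2) (card_le_two_mul_card_filter_card_filter_adj_le hsparse)
    hIL hIn hkt hnB
  obtain ⟨X, hXI, hXt, hX⟩ := exists_le_card_filter_filter_adj_eq (G := G)
    (U := {v ∈ L \ I | #{u ∈ I | G.Adj v u} ≤ t}) (by lia) hIn.le (fun v hv => (mem_filter.1 hv).2)
    (le_of_mul_le_mul_left (hB.trans hmany) (by norm_num))
  set W := {v ∈ {v ∈ L \ I | #{u ∈ I | G.Adj v u} ≤ t} | {u ∈ I | G.Adj v u} = X}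
  have hWL : W ⊆ L \ I := (filter_subset _ _).trans (filter_subset _ _)
  obtain ⟨S, hSW, hS⟩ | ⟨J, hJW, hJ⟩ := exists_isNClique_or_isNIndepSet_of_choose_le_card hX
  · exact .inl ⟨S, hSW.trans (hWL.trans (sdiff_subset.trans hLB)), hS⟩
  · have htrace : ∀ v ∈ J, ∀ u ∈ I, G.Adj v u → u ∈ X := fun v hv u hu hvu =>
      (mem_filter.1 (hJW hv)).2 ▸ mem_filter.2 ⟨hu, hvu⟩
    have := card_le_card_of_forall_adj_mem hIL hI hmax hXI (hJW.trans hWL) hJ.isIndepSet htrace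
    have := hJ.card_eq
    lia

end ErdosSzemeredi

section GraphFamilies

variable {ι V : Type*} {G : ι → SimpleGraph V}

lemma exists_isClique_of_forall_exists_isNClique {A : Finset V} {U : Finset ι} {k m : ℕ}
    (hU : U.Nonempty) (hG : ∀ i ∈ U, ∃ K ⊆ A, (G i).IsNClique k K)
    (hm : (#A).choose k * m ≤ #U) :
    ∃ K ⊆ A, #K = k ∧ ∃ B ⊆ U, m ≤ #B ∧ ∀ i ∈ B, (G i).IsClique K := by
  classical
  choose! K hKA hK using hG
  have hmaps : ∀ i ∈ U, K i ∈ A.powersetCard k := fun i hi =>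
    mem_powersetCard.2 ⟨hKA i hi, (hK i hi).card_eq⟩
  obtain ⟨K₀, hK₀, hmK₀⟩ := exists_le_card_fiber_of_mul_le_card_of_maps_to hmaps
    (hU.elim fun i hi => ⟨_, hmaps i hi⟩) (by rwa [card_powersetCard])
  obtain ⟨hK₀A, hK₀k⟩ := mem_powersetCard.1 hK₀
  refine ⟨K₀, hK₀A, hK₀k, {i ∈ U | K i = K₀}, filter_subset _ _, hmK₀, fun i hi => ?_⟩
  obtain ⟨hiU, rfl⟩ := mem_filter.1 hi
  exact (hK i hiU).isClique

lemma exists_card_mul_card_interedges_le_sq [∀ i, DecidableRel (G i).Adj] {K : Finset ι}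
    {B : Finset V} (hK : K.Nonempty)
    (hdisj : (K : Set ι).PairwiseDisjoint fun i => (G i).interedges B B) :
    ∃ i ∈ K, #K * #((G i).interedges B B) ≤ #B ^ 2 := by
  classical
  obtain ⟨i, hi, hmin⟩ := exists_min_image K (fun i => #((G i).interedges B B)) hK
  refine ⟨i, hi, ?_⟩
  calc #K * #((G i).interedges B B) ≤ ∑ j ∈ K, #((G j).interedges B B) := by
        rw [← smul_eq_mul]
        exact card_nsmul_le_sum _ _ _ hmin
    _ = #(K.biUnion fun j => (G j).interedges B B) := (card_biUnion hdisj).symm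
    _ ≤ #(B ×ˢ B) := card_le_card (biUnion_subset.2 fun _ _ => filter_subset _ _)
    _ = #B ^ 2 := by rw [card_product, sq]

lemma isNIndepSet_of_disjoint_interedges {G H : SimpleGraph V} [DecidableRel G.Adj]
    [DecidableRel H.Adj] {B S : Finset V} {n : ℕ}
    (hdisj : Disjoint (G.interedges B B) (H.interedges B B)) (hSB : S ⊆ B)
    (hS : G.IsNClique n S) : H.IsNIndepSet n S where
  isIndepSet a ha b hb hab hadj := by
    have hG : (a, b) ∈ G.interedges B B :=
      G.mk_mem_interedges_iff.2 ⟨hSB ha, hSB hb, hS.isClique ha hb hab⟩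
    have hH : (a, b) ∈ H.interedges B B := H.mk_mem_interedges_iff.2 ⟨hSB ha, hSB hb, hadj⟩
    exact disjoint_left.1 hdisj hG hH
  card_eq := hS.card_eq

end GraphFamilies

section Link

/-- The red link of a vertex `v` in a colouring `χ` of triples: the graph joining `a` and `b` when
`{v, a, b}` is a red triple. The vertex `v` is kept as an isolated vertex, and sets `{v, a, b}` with
fewer than three elements are ignored. -/
def redLink {V : Type*} [DecidableEq V] (χ : Finset V → Bool) (v : V) : SimpleGraph V where
  Adj a b := v ≠ a ∧ v ≠ b ∧ a ≠ b ∧ χ {v, a, b} = true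
  symm := ⟨fun a b ⟨hva, hvb, hab, hχ⟩ => ⟨hvb, hva, hab.symm, by rwa [pair_comm b a]⟩⟩
  loopless := ⟨fun _ h => h.2.2.1 rfl⟩

instance {V : Type*} [DecidableEq V] (χ : Finset V → Bool) (v : V) :
    DecidableRel (redLink χ v).Adj :=
  fun a b => inferInstanceAs (Decidable (v ≠ a ∧ v ≠ b ∧ a ≠ b ∧ χ {v, a, b} = true))

variable {N n k m t : ℕ} {χ : Finset (Fin N) → Bool}

lemma hasBlueStar_of_isNIndepSet_redLink {v : Fin N} {S : Finset (Fin N)} (hv : v ∉ S)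
    (hS : (redLink χ v).IsNIndepSet n S) : HasBlueStar N n χ := by
  refine ⟨v, S, hv, hS.card_eq, fun a ha b hb hab => Bool.eq_false_iff.2 fun hred => ?_⟩
  exact hS.isIndepSet ha hb hab ⟨fun h => hv (h ▸ ha), fun h => hv (h ▸ hb), hab, hred⟩

lemma hasRedClique3_four_of_redLink_adj {x y b c : Fin N} (hxbc : (redLink χ x).Adj b c)
    (hybc : (redLink χ y).Adj b c) (hbxy : (redLink χ b).Adj x y) (hcxy : (redLink χ c).Adj x y) :
    HasRedClique3 N 4 χ := by
  obtain ⟨hxb, hxc, hbc, hχxbc⟩ := hxbc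
  obtain ⟨hyb, hyc, -, hχybc⟩ := hybc
  obtain ⟨-, -, hxy, hχbxy⟩ := hbxy
  obtain ⟨-, -, -, hχcxy⟩ := hcxy
  have hcard : #{x, y, b, c} = 4 := by simp [hxy, hxb, hxc, hyb, hyc, hbc]
  refine ⟨{x, y, b, c}, hcard, fun T hT hT3 => ?_⟩
  obtain ⟨z, hz, hzT⟩ := exists_mem_notMem_of_card_lt_card (by lia : #T < #{x, y, b, c})
  have hTz : T = ({x, y, b, c} : Finset (Fin N)).erase z :=
    eq_of_subset_of_card_le (subset_erase.2 ⟨hT, hzT⟩) (by rw [card_erase_of_mem hz]; lia)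
  simp only [mem_insert, mem_singleton] at hz
  obtain rfl | rfl | rfl | rfl := hz
  · rwa [show T = {y, b, c} by grind]
  · rwa [show T = {x, b, c} by grind]
  · rwa [show T = {c, x, y} by grind]
  · rwa [show T = {b, x, y} by grind]

lemma pairwiseDisjoint_interedges_redLink {K B : Finset (Fin N)} (hχ : ¬HasRedClique3 N 4 χ)
    (hK : ∀ b ∈ B, (redLink χ b).IsClique K) :
    (K : Set (Fin N)).PairwiseDisjoint fun x => (redLink χ x).interedges B B := by
  intro x hx y hy hxy
  refine disjoint_left.2 fun ⟨b, c⟩ hxbc hybc => hχ ?_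
  rw [SimpleGraph.mk_mem_interedges_iff] at hxbc hybc
  obtain ⟨hb, hc, hxbc⟩ := hxbc
  exact hasRedClique3_four_of_redLink_adj hxbc hybc.2.2 (hK b hb hx hy hxy) (hK c hc hx hy hxy)

lemma exists_isClique_redLink_of_not_hasBlueStar (hχ : ¬HasBlueStar N n χ) (hm : 0 < m)
    (hN : (k + n).choose k + (k + n).choose k ^ k * m ≤ N) :
    ∃ K B : Finset (Fin N), Disjoint K B ∧ #K = k ∧ m ≤ #B ∧
      ∀ b ∈ B, (redLink χ b).IsClique K := by
  obtain ⟨A, -, hA⟩ : ∃ A ⊆ (univ : Finset (Fin N)), #A = (k + n).choose k :=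
    exists_subset_card_eq (by rw [card_fin]; lia)
  have hAc : (k + n).choose k ^ k * m ≤ #Aᶜ := by
    rw [card_compl, hA, Fintype.card_fin]
    lia
  have hAc_pos : 0 < #Aᶜ :=
    (Nat.mul_pos (Nat.pow_pos (Nat.choose_pos (Nat.le_add_right k n))) hm).trans_le hAc
  have hclique : ∀ b ∈ Aᶜ, ∃ K ⊆ A, (redLink χ b).IsNClique k K := by
    intro b hb
    refine (exists_isNClique_or_isNIndepSet_of_choose_le_card hA.ge).resolve_right ?_
    rintro ⟨S, hSA, hS⟩
    exact hχ (hasBlueStar_of_isNIndepSet_redLink (fun h => mem_compl.1 hb (hSA h)) hS)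
  obtain ⟨K, hKA, hKk, B, hBA, hmB, hKB⟩ := exists_isClique_of_forall_exists_isNClique
    (card_pos.1 hAc_pos) hclique
    ((Nat.mul_le_mul_right m (hA ▸ Nat.choose_le_pow _ _)).trans hAc)
  exact ⟨K, B, (disjoint_compl_right (a := A)).mono hKA hBA, hKk, hmB, hKB⟩

theorem hasRedClique3_or_hasBlueStar_of_choose_le (hn : 0 < n) (hk : 2 ≤ k)
    (hkt : 8 * n ≤ k * (t + 1)) (hnm : 8 * n ≤ m)
    (hm : 8 * ((t + 1) * n ^ t * (n + (t + 1)).choose n) ≤ m)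
    (hN : (k + n).choose k + (k + n).choose k ^ k * m ≤ N) (χ : Finset (Fin N) → Bool) :
    HasRedClique3 N 4 χ ∨ HasBlueStar N n χ := by
  refine or_iff_not_imp_left.2 fun hred => by_contra fun hblue => ?_
  obtain ⟨K, B, hKB, hKk, hmB, hK⟩ :=
    exists_isClique_redLink_of_not_hasBlueStar hblue (by lia) hN
  have hdisj := pairwiseDisjoint_interedges_redLink hred hK
  obtain ⟨x, hx, hsparse⟩ := exists_card_mul_card_interedges_le_sq (card_pos.1 (by lia)) hdisj
  rw [hKk] at hsparse
  have hstar : ∀ v ∈ K, ∀ S ⊆ B, ¬(redLink χ v).IsNIndepSet n S := fun v hv S hSB hS =>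
    hblue (hasBlueStar_of_isNIndepSet_redLink (fun h => disjoint_left.1 hKB hv (hSB h)) hS)
  obtain ⟨S, hSB, hS⟩ | ⟨S, hSB, hS⟩ := exists_isNClique_or_isNIndepSet_of_sparse hkt hsparse
    (hnm.trans hmB) (hm.trans hmB)
  · obtain ⟨y, hy, hyx⟩ := exists_mem_ne (by lia : 1 < #K) x
    exact hstar y hy S hSB (isNIndepSet_of_disjoint_interedges (hdisj hx hy hyx.symm) hSB hS)
  · exact hstar x hx S hSB hS

end Link

section Estimates

variable {n k t : ℕ}

lemma eight_mul_le_pow {e : ℕ} (hn : 2 ≤ n) (he : 4 ≤ e) : 8 * n ≤ n ^ e := calc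
  8 * n ≤ n ^ 3 * n := Nat.mul_le_mul_right _ (Nat.pow_le_pow_left hn 3)
  _ = n ^ 4 := (pow_succ n 3).symm
  _ ≤ n ^ e := Nat.pow_le_pow_right (by lia) he

lemma eight_mul_mul_choose_le_pow (hn : 2 ≤ n) (ht : t ≤ 4 * n) :
    8 * ((t + 1) * n ^ t * (n + (t + 1)).choose n) ≤ n ^ (5 * t + 11) := by
  have h8 : 8 ≤ n ^ 3 := Nat.pow_le_pow_left hn 3
  have h5n : 5 * n + 1 ≤ n ^ 4 := by nlinarith [pow_succ n 3]
  have hchoose : (n + (t + 1)).choose n ≤ (n ^ 4) ^ (t + 1) := by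
    rw [Nat.choose_symm_add]
    exact (Nat.choose_le_pow _ _).trans (Nat.pow_le_pow_left (by lia) _)
  calc 8 * ((t + 1) * n ^ t * (n + (t + 1)).choose n)
      ≤ n ^ 3 * (n ^ 4 * n ^ t * (n ^ 4) ^ (t + 1)) := by
        gcongr
        lia
    _ = n ^ (5 * t + 11) := by ring

lemma choose_add_choose_pow_mul_le_pow (hn : 2 ≤ n) (hkn : k ≤ n) (e : ℕ) :
    (k + n).choose k + (k + n).choose k ^ k * n ^ e ≤ n ^ (2 * k ^ 2 + e + 1) := by
  have hchoose : (k + n).choose k ≤ n ^ (2 * k) := by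
    rw [pow_mul]
    exact (Nat.choose_le_pow _ _).trans (Nat.pow_le_pow_left (by nlinarith) _)
  have hchoose' : (k + n).choose k ≤ n ^ (2 * k ^ 2 + e) :=
    hchoose.trans (Nat.pow_le_pow_right (by lia) (by nlinarith [Nat.le_self_pow two_ne_zero k]))
  calc (k + n).choose k + (k + n).choose k ^ k * n ^ e
      ≤ n ^ (2 * k ^ 2 + e) + (n ^ (2 * k)) ^ k * n ^ e := by gcongr
    _ = n ^ (2 * k ^ 2 + e) * 2 := by ring
    _ ≤ n ^ (2 * k ^ 2 + e) * n := by gcongr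
    _ = n ^ (2 * k ^ 2 + e + 1) := (pow_succ _ _).symm

lemma exists_balanced_parameters (hn : 2 ≤ n) :
    ∃ k t : ℕ, 2 ≤ k ∧ k ≤ n ∧ t ≤ 4 * n ∧ 8 * n ≤ k * (t + 1) ∧
      ((2 * k ^ 2 + (5 * t + 11) + 1 : ℕ) : ℝ) ≤ 60 * (n : ℝ) ^ ((2 : ℝ) / 3) := by
  have hn1 : (1 : ℝ) < n := by exact_mod_cast hn
  set y : ℝ := (n : ℝ) ^ ((1 : ℝ) / 3) with hy
  have hy_pow (j : ℕ) : y ^ j = (n : ℝ) ^ ((j : ℝ) / 3) := by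
    rw [hy, ← Real.rpow_mul_natCast (by positivity), one_div_mul_eq_div]
  have hy3 : y ^ 3 = n := by simp [hy_pow]
  have hy2 : y ^ 2 = (n : ℝ) ^ ((2 : ℝ) / 3) := mod_cast hy_pow 2
  have hy1 : 1 < y := Real.one_lt_rpow hn1 (by norm_num)
  have hk : 2 ≤ ⌈y⌉₊ := Nat.lt_ceil.2 (by simpa using hy1)
  have hkt : ⌈y⌉₊ * (8 * n / ⌈y⌉₊) ≤ 8 * n := Nat.mul_div_le _ _
  refine ⟨⌈y⌉₊, 8 * n / ⌈y⌉₊, hk, ?_, by nlinarith,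
    (Nat.lt_mul_div_succ _ (by lia)).le, ?_⟩
  · exact Nat.ceil_le.2 (hy3 ▸ le_self_pow₀ hy1.le (by norm_num))
  · have hky : (⌈y⌉₊ : ℝ) ≤ 2 * y := by linarith [Nat.ceil_lt_add_one (by positivity : 0 ≤ y)]
    have hty : ((8 * n / ⌈y⌉₊ : ℕ) : ℝ) ≤ 8 * y ^ 2 := by
      refine le_of_mul_le_mul_left ?_ (by positivity : 0 < y)
      calc y * (8 * n / ⌈y⌉₊ : ℕ) ≤ ⌈y⌉₊ * (8 * n / ⌈y⌉₊ : ℕ) := by gcongr; exact Nat.le_ceil y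
        _ ≤ 8 * n := mod_cast hkt
        _ = y * (8 * y ^ 2) := by rw [← hy3]; ring
    have hk2 : (⌈y⌉₊ : ℝ) ^ 2 ≤ (2 * y) ^ 2 := by gcongr
    rw [← hy2]
    push_cast
    nlinarith

lemma pow_le_of_two_rpow_mul_logb_le {N e : ℕ} {a : ℝ} (hn : 1 ≤ n) (hea : e ≤ a)
    (hN : (2 : ℝ) ^ (a * Real.logb 2 n) ≤ N) : n ^ e ≤ N := by
  have hcast : ((n ^ e : ℕ) : ℝ) ≤ N := calc
    ((n ^ e : ℕ) : ℝ) = (n : ℝ) ^ (e : ℝ) := by rw [Nat.cast_pow, Real.rpow_natCast]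
    _ ≤ (n : ℝ) ^ a := Real.rpow_le_rpow_of_exponent_le (mod_cast hn) hea
    _ = 2 ^ (a * Real.logb 2 n) := by
      rw [mul_comm, Real.rpow_mul two_pos.le, Real.rpow_logb two_pos (by norm_num) (by positivity)]
    _ ≤ N := hN
  exact_mod_cast hcast

end Estimates

/-- There is `c' > 0` such that for all `n ≥ 2`, `r(K₄⁽³⁾, Sₙ) ≤ 2^(c' n^(2/3) log₂ n)`:
if `N ≥ 2^(c' n^(2/3) log₂ n)` then every 2-coloring of `K_N^(3)` contains a red
`K₄⁽³⁾` or a blue `Sₙ`. -/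
theorem upper_bound_K4_star :
    ∃ c' : ℝ, 0 < c' ∧ ∀ n : ℕ, 2 ≤ n →
      ∀ N : ℕ, (2 : ℝ) ^ (c' * (n : ℝ) ^ ((2 : ℝ) / 3) * Real.logb 2 n) ≤ N →
        ∀ χ : Finset (Fin N) → Bool, HasRedClique3 N 4 χ ∨ HasBlueStar N n χ := by
  refine ⟨60, by norm_num, fun n hn N hN χ => ?_⟩
  obtain ⟨k, t, hk, hkn, ht, hkt, hexp⟩ := exists_balanced_parameters hn
  have hnm : 8 * n ≤ n ^ (5 * t + 11) := eight_mul_le_pow hn (by lia)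
  have hpow : n ^ (2 * k ^ 2 + (5 * t + 11) + 1) ≤ N :=
    pow_le_of_two_rpow_mul_logb_le (by lia) hexp hN
  exact hasRedClique3_or_hasBlueStar_of_choose_le (by lia) hk hkt hnm
    (eight_mul_mul_choose_le_pow hn ht) ((choose_add_choose_pow_mul_le_pow hn hkn _).trans hpow) χ
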